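/- arXiv:1608.04575 — 2 statements merged into one kernel-verified Lean document; each statement's English description precedes it below -/
import Mathlib

section
/- Let a = (a₁,…,aₙ) ∈ [1,∞)ⁿ and a_t ≥ 1. Let k₀, k ∈ 𝓢(ℝⁿ) satisfy: supp k₀, supp k ⊆ {x ∈ ℝⁿ : xₙ ≥ 0}, k has vanishing moments of all orders, and Σ_{j=0}^∞ k_j * u = u in 𝓢'(ℝⁿ) for every u ∈ 𝓢'(ℝⁿ). Let η ∈ 𝓢(ℝ) with η(0) = 1. For u ∈ 𝓢'(ℝⁿ) and t ∈ ℝ define Qu(·,t) by ⟨Qu(·,t), φ⟩ = Σ_{j=0}^∞ η(2^{j a_t} t)·⟨k_j * u, φ⟩ for φ ∈ 𝓢(ℝⁿ). Then: for every φ ∈ 𝓢(ℝⁿ) the series converges absolutely, uniformly in t ∈ ℝ; Qu(·,t) ∈ 𝓢'(ℝⁿ) for every t; the map t ↦ Qu(·,t) is weak*-continuous with sup_{t∈ℝ} |⟨Qu(·,t), φ⟩| < ∞ for each φ; and Qu(·,0) = u. -/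
open MeasureTheory Filter Topology

noncomputable section

/-- Anisotropic dilation: `θ_0 = θ₀` and `θ_j(x) = 2^{j|a|} θ(2^{ja}x)` for `j ≥ 1`. -/
def anisoDil {m : ℕ} (a : Fin m → ℝ) (θ₀ θ : (Fin m → ℝ) → ℝ) (j : ℕ)
    (x : Fin m → ℝ) : ℝ :=
  if j = 0 then θ₀ x
  else (2:ℝ) ^ ((j:ℝ) * ∑ i, a i) * θ (fun i => (2:ℝ) ^ ((j:ℝ) * a i) * x i)

/-- `θ` has vanishing moments of all orders. -/
def VanishingMoments {m : ℕ} (θ : (Fin m → ℝ) → ℝ) : Prop :=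
  ∀ α : Fin m → ℕ, (∫ x : Fin m → ℝ, (∏ i, x i ^ α i) * θ x) = 0

/-- `x ↦ ∫ κ(w) φ(x + δ w) dμ(w)`. -/
def dilatedAverage {E F : Type} [NormedAddCommGroup E] [NormedSpace ℝ E] [MeasurableSpace E]
    [NormedAddCommGroup F] [NormedSpace ℝ F] (μ : Measure E) (κ : SchwartzMap E ℝ)
    (δ : E →L[ℝ] E) (φ : SchwartzMap E F) (x : E) : F :=
  ∫ w, κ w • φ (x + δ w) ∂μ

theorem one_add_norm_le_mul_of_mem_segment {E : Type} [NormedAddCommGroup E]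
    [NormedSpace ℝ E] {δ : E →L[ℝ] E} (hδ : ‖δ‖ ≤ 1) {x w z : E}
    (hz : z ∈ segment ℝ x (x + δ w)) : 1 + ‖x‖ ≤ (1 + ‖z‖) * (1 + ‖w‖) := by
  have h₁ : ‖x - z‖ ≤ ‖δ w‖ := by
    have := norm_sub_le_of_mem_segment hz
    rw [norm_sub_rev]
    simpa using this
  have h₂ : ‖δ w‖ ≤ ‖w‖ := by simpa using δ.le_of_opNorm_le hδ w
  have h₃ : ‖x‖ ≤ ‖z‖ + ‖x - z‖ := by simpa using norm_add_le z (x - z)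
  nlinarith [norm_nonneg z, norm_nonneg w]

section DilatedAverage

variable {E F : Type} [NormedAddCommGroup E] [NormedSpace ℝ E] [MeasurableSpace E]
  [BorelSpace E] [SecondCountableTopology E] [NormedAddCommGroup F] [NormedSpace ℝ F]
  {μ : Measure E} [μ.HasTemperateGrowth]

theorem integrable_one_add_norm_pow_mul (κ : SchwartzMap E ℝ) (m : ℕ) :
    Integrable (fun w => (1 + ‖w‖) ^ m * ‖κ w‖) μ := by
  simp_rw [add_comm (1 : ℝ), add_pow, Finset.sum_mul]
  refine integrable_finsetSum _ fun i _ => ?_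
  refine ((κ.integrable_pow_mul μ i).mul_const (m.choose i : ℝ)).congr (.of_forall fun w => ?_)
  simp only [one_pow]
  ring

theorem integrable_smul_translate (κ : SchwartzMap E ℝ) (δ : E →L[ℝ] E) (φ : SchwartzMap E F)
    (x : E) : Integrable (fun w => κ w • φ (x + δ w)) μ := by
  refine (κ.integrable.norm.mul_const (SchwartzMap.seminorm ℝ 0 0 φ)).mono'
    (κ.continuous.smul (φ.continuous.comp
      (continuous_const.add δ.continuous))).aestronglyMeasurable (.of_forall fun w => ?_)
  rw [norm_smul]
  gcongr
  exact SchwartzMap.norm_le_seminorm ℝ φ _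

theorem hasFDerivAt_dilatedAverage (κ : SchwartzMap E ℝ) (δ : E →L[ℝ] E) (φ : SchwartzMap E F)
    (x : E) : HasFDerivAt (dilatedAverage μ κ δ φ)
      (dilatedAverage μ κ δ (SchwartzMap.fderivCLM ℝ E F φ) x) x := by
  refine hasFDerivAt_integral_of_dominated_of_fderiv_le (s := Set.univ)
    (F' := fun x w => κ w • SchwartzMap.fderivCLM ℝ E F φ (x + δ w))
    (bound := fun w => ‖κ w‖ * SchwartzMap.seminorm ℝ 0 0 (SchwartzMap.fderivCLM ℝ E F φ))
    Filter.univ_mem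
    (.of_forall fun y => (integrable_smul_translate κ δ φ y).aestronglyMeasurable)
    (integrable_smul_translate κ δ φ x)
    (integrable_smul_translate κ δ _ x).aestronglyMeasurable
    (.of_forall fun w y _ => ?_) (κ.integrable.norm.mul_const _) (.of_forall fun w y _ => ?_)
  · rw [norm_smul]
    gcongr
    exact SchwartzMap.norm_le_seminorm ℝ _ _
  · have h : HasFDerivAt φ (fderiv ℝ φ (y + δ w)) (y + δ w) :=
      φ.differentiableAt.hasFDerivAt
    exact ((hasFDerivAt_comp_add_right (δ w)).2 h).const_smul (κ w)

theorem fderiv_dilatedAverage (κ : SchwartzMap E ℝ) (δ : E →L[ℝ] E) (φ : SchwartzMap E F) :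
    fderiv ℝ (dilatedAverage μ κ δ φ) =
      dilatedAverage μ κ δ (SchwartzMap.fderivCLM ℝ E F φ) :=
  funext fun x => (hasFDerivAt_dilatedAverage κ δ φ x).fderiv

theorem contDiff_dilatedAverage (κ : SchwartzMap E ℝ) (δ : E →L[ℝ] E) (φ : SchwartzMap E F) :
    ContDiff ℝ (⊤ : ℕ∞) (dilatedAverage μ κ δ φ) := by
  refine contDiff_infty.2 fun l => ?_
  induction l generalizing F with
  | zero =>
    exact contDiff_zero.2 (continuous_iff_continuousAt.2 fun x =>
      (hasFDerivAt_dilatedAverage κ δ φ x).continuousAt)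
  | succ l ih =>
    push_cast
    refine contDiff_succ_iff_fderiv.2
      ⟨fun x => (hasFDerivAt_dilatedAverage κ δ φ x).differentiableAt, by simp, ?_⟩
    rw [fderiv_dilatedAverage]
    exact ih _

/-- A weighted bound of `dilatedAverage` by the derivatives of order `d` propagates to
all derivatives. -/
theorem iteratedFDeriv_dilatedAverage_le (κ : SchwartzMap E ℝ) (δ : E →L[ℝ] E) (d M : ℕ) (C : ℝ)
    (hC : ∀ (F : Type) [NormedAddCommGroup F] [NormedSpace ℝ F] (φ : SchwartzMap E F) (A : ℝ),
      (∀ y, (1 + ‖y‖) ^ M * ‖iteratedFDeriv ℝ d φ y‖ ≤ A) →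
      ∀ x, (1 + ‖x‖) ^ M * ‖dilatedAverage μ κ δ φ x‖ ≤ C * A)
    (l : ℕ) (φ : SchwartzMap E F) (A : ℝ)
    (hA : ∀ y, (1 + ‖y‖) ^ M * ‖iteratedFDeriv ℝ (l + d) φ y‖ ≤ A) (x : E) :
    (1 + ‖x‖) ^ M * ‖iteratedFDeriv ℝ l (dilatedAverage μ κ δ φ) x‖ ≤ C * A := by
  induction l generalizing F with
  | zero =>
    rw [norm_iteratedFDeriv_zero]
    refine hC F φ A (fun y => ?_) x
    have h := hA y
    rwa [zero_add] at h
  | succ l ih =>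
    rw [← norm_iteratedFDeriv_fderiv, fderiv_dilatedAverage]
    refine ih _ fun y => ?_
    have h := hA y
    rwa [show l + 1 + d = l + d + 1 by ring, ← norm_iteratedFDeriv_fderiv] at h

theorem one_add_norm_pow_mul_dilatedAverage_le (κ : SchwartzMap E ℝ) {δ : E →L[ℝ] E}
    (hδ : ‖δ‖ ≤ 1) (M : ℕ) (φ : SchwartzMap E F) (A : ℝ)
    (hA : ∀ y, (1 + ‖y‖) ^ M * ‖iteratedFDeriv ℝ 0 φ y‖ ≤ A) (x : E) :
    (1 + ‖x‖) ^ M * ‖dilatedAverage μ κ δ φ x‖ ≤ (∫ w, (1 + ‖w‖) ^ M * ‖κ w‖ ∂μ) * A := by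
  rw [dilatedAverage, ← integral_mul_const]
  have hx : 0 < (1 + ‖x‖) ^ M := by positivity
  rw [← abs_of_pos hx, ← Real.norm_eq_abs, ← norm_smul, ← integral_smul]
  refine norm_integral_le_of_norm_le ((integrable_one_add_norm_pow_mul κ M).mul_const A)
    (.of_forall fun w => ?_)
  rw [norm_smul, norm_smul, Real.norm_eq_abs, abs_of_pos hx]
  have h := one_add_norm_le_mul_of_mem_segment hδ (right_mem_segment ℝ x (x + δ w))
  have hAw := hA (x + δ w)
  rw [norm_iteratedFDeriv_zero] at hAw
  calc (1 + ‖x‖) ^ M * (‖κ w‖ * ‖φ (x + δ w)‖)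
      ≤ ((1 + ‖x + δ w‖) * (1 + ‖w‖)) ^ M * (‖κ w‖ * ‖φ (x + δ w)‖) := by gcongr
    _ = (1 + ‖w‖) ^ M * ‖κ w‖ * ((1 + ‖x + δ w‖) ^ M * ‖φ (x + δ w)‖) := by
        rw [mul_pow]
        ring
    _ ≤ (1 + ‖w‖) ^ M * ‖κ w‖ * A := by gcongr

theorem one_add_norm_pow_mul_dilatedAverage_le_of_integral_eq_zero (κ : SchwartzMap E ℝ)
    (hκ : ∫ w, κ w ∂μ = 0) {δ : E →L[ℝ] E}
    (hδ : ‖δ‖ ≤ 1) (M : ℕ) (φ : SchwartzMap E F) (A : ℝ)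
    (hA : ∀ y, (1 + ‖y‖) ^ M * ‖iteratedFDeriv ℝ 1 φ y‖ ≤ A) (x : E) :
    (1 + ‖x‖) ^ M * ‖dilatedAverage μ κ δ φ x‖ ≤
      ‖δ‖ * (∫ w, (1 + ‖w‖) ^ (M + 1) * ‖κ w‖ ∂μ) * A := by
  have hA0 : 0 ≤ A := le_trans (by positivity) (hA 0)
  have hx : 0 < (1 + ‖x‖) ^ M := by positivity
  have hsub : dilatedAverage μ κ δ φ x = ∫ w, κ w • (φ (x + δ w) - φ x) ∂μ := by
    simp_rw [smul_sub]
    rw [integral_sub (integrable_smul_translate κ δ φ x) (κ.integrable.smul_const _)]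
    by_cases hF : CompleteSpace F
    · rw [integral_smul_const, hκ, zero_smul, sub_zero, dilatedAverage]
    · simp [dilatedAverage, integral, hF]
  rw [hsub, ← integral_const_mul, ← integral_mul_const,
    ← abs_of_pos hx, ← Real.norm_eq_abs, ← norm_smul, ← integral_smul]
  refine norm_integral_le_of_norm_le
    (((integrable_one_add_norm_pow_mul κ (M + 1)).const_mul ‖δ‖).mul_const A)
    (.of_forall fun w => ?_)
  rw [norm_smul, norm_smul, Real.norm_eq_abs, abs_of_pos hx]
  have hmv : ‖φ (x + δ w) - φ x‖ ≤ A * (1 + ‖w‖) ^ M / (1 + ‖x‖) ^ M * ‖x + δ w - x‖ := by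
    refine (convex_segment x (x + δ w)).norm_image_sub_le_of_norm_fderiv_le (𝕜 := ℝ)
      (fun z _ => φ.differentiableAt) (fun z hz => ?_)
      (left_mem_segment ℝ _ _) (right_mem_segment ℝ _ _)
    rw [le_div_iff₀ hx]
    have h := one_add_norm_le_mul_of_mem_segment hδ hz
    have hAz := hA z
    rw [norm_iteratedFDeriv_one] at hAz
    calc ‖fderiv ℝ φ z‖ * (1 + ‖x‖) ^ M
        ≤ ‖fderiv ℝ φ z‖ * ((1 + ‖z‖) * (1 + ‖w‖)) ^ M := by gcongr
      _ = ((1 + ‖z‖) ^ M * ‖fderiv ℝ φ z‖) * (1 + ‖w‖) ^ M := by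
          rw [mul_pow]
          ring
      _ ≤ A * (1 + ‖w‖) ^ M := by gcongr
  have hδw : ‖x + δ w - x‖ ≤ ‖δ‖ * (1 + ‖w‖) := by
    rw [add_sub_cancel_left]
    exact (δ.le_opNorm w).trans (by gcongr; linarith)
  calc (1 + ‖x‖) ^ M * (‖κ w‖ * ‖φ (x + δ w) - φ x‖)
      ≤ (1 + ‖x‖) ^ M * (‖κ w‖ *
          (A * (1 + ‖w‖) ^ M / (1 + ‖x‖) ^ M * (‖δ‖ * (1 + ‖w‖)))) := by
        gcongr
        exact hmv.trans (by gcongr)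
    _ = ‖δ‖ * ((1 + ‖w‖) ^ (M + 1) * ‖κ w‖) * A := by
        rw [pow_succ]
        field_simp

theorem norm_pow_mul_iteratedFDeriv_dilatedAverage_le (κ : SchwartzMap E ℝ) (δ : E →L[ℝ] E)
    (d : ℕ) (C : ℝ) {M L m l : ℕ} (hm : m ≤ M) (hl : l ≤ L)
    (hC : ∀ (F : Type) [NormedAddCommGroup F] [NormedSpace ℝ F] (φ : SchwartzMap E F) (A : ℝ),
      (∀ y, (1 + ‖y‖) ^ M * ‖iteratedFDeriv ℝ d φ y‖ ≤ A) →
      ∀ x, (1 + ‖x‖) ^ M * ‖dilatedAverage μ κ δ φ x‖ ≤ C * A)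
    (φ : SchwartzMap E F) (x : E) :
    ‖x‖ ^ m * ‖iteratedFDeriv ℝ l (dilatedAverage μ κ δ φ) x‖ ≤
      C * (2 ^ M * (Finset.Iic (M, L + d)).sup (schwartzSeminormFamily ℝ E F) φ) := by
  refine le_trans ?_ (iteratedFDeriv_dilatedAverage_le κ δ d M C hC l φ _
    (fun y => SchwartzMap.one_add_le_sup_seminorm_apply (𝕜 := ℝ) (m := (M, L + d)) le_rfl
      (by simpa using hl) φ y) x)
  gcongr
  calc ‖x‖ ^ m ≤ (1 + ‖x‖) ^ m := by gcongr; linarith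
    _ ≤ (1 + ‖x‖) ^ M := pow_le_pow_right₀ (by simp) hm

/-- `dilatedAverage` as a continuous linear map of the Schwartz space. -/
def dilatedAverageCLM (μ : Measure E) [μ.HasTemperateGrowth] (κ : SchwartzMap E ℝ)
    (δ : E →L[ℝ] E) (hδ : ‖δ‖ ≤ 1) : SchwartzMap E F →L[ℝ] SchwartzMap E F :=
  SchwartzMap.mkCLM (σ := RingHom.id ℝ) (dilatedAverage μ κ δ)
    (fun f g x => by
      simp only [dilatedAverage, add_apply, smul_add]
      exact integral_add (integrable_smul_translate κ δ f x) (integrable_smul_translate κ δ g x))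
    (fun c f x => by
      simp only [dilatedAverage, smul_apply, RingHom.id_apply, smul_comm _ c]
      exact integral_smul c _)
    (fun f => contDiff_dilatedAverage κ δ f)
    (fun i => ⟨Finset.Iic (i.1, i.2 + 0), (∫ w, (1 + ‖w‖) ^ i.1 * ‖κ w‖ ∂μ) * 2 ^ i.1,
      by positivity, fun f x => by
        rw [mul_assoc]
        exact norm_pow_mul_iteratedFDeriv_dilatedAverage_le κ δ 0 _ le_rfl le_rfl
          (fun _ _ _ => one_add_norm_pow_mul_dilatedAverage_le κ hδ i.1) f x⟩)

theorem dilatedAverageCLM_apply (κ : SchwartzMap E ℝ) (δ : E →L[ℝ] E) (hδ : ‖δ‖ ≤ 1)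
    (φ : SchwartzMap E F) (x : E) :
    dilatedAverageCLM μ κ δ hδ φ x = ∫ w, κ w • φ (x + δ w) ∂μ :=
  rfl

/-- A cancelling kernel makes a continuous functional of the average `O(‖δ‖)`. -/
theorem exists_norm_apply_dilatedAverageCLM_le (κ : SchwartzMap E ℝ) (hκ : ∫ w, κ w ∂μ = 0)
    (u : SchwartzMap E F →L[ℝ] ℝ) :
    ∃ (s : Finset (ℕ × ℕ)) (C : ℝ), 0 ≤ C ∧ ∀ (δ : E →L[ℝ] E) (hδ : ‖δ‖ ≤ 1)
      (φ : SchwartzMap E F), |u (dilatedAverageCLM μ κ δ hδ φ)| ≤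
        C * ‖δ‖ * s.sup (schwartzSeminormFamily ℝ E F) φ := by
  obtain ⟨s, C, -, hC⟩ := Seminorm.bound_of_continuous (schwartz_withSeminorms ℝ E F)
    ((normSeminorm ℝ ℝ).comp u.toLinearMap) (by exact continuous_norm.comp u.continuous)
  set M := s.sup Prod.fst
  set L := s.sup Prod.snd
  set I := ∫ w, (1 + ‖w‖) ^ (M + 1) * ‖κ w‖ ∂μ
  have hI : 0 ≤ I := integral_nonneg fun w => by positivity
  refine ⟨Finset.Iic (M, L + 1), C * I * 2 ^ M, by positivity, fun δ hδ φ => ?_⟩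
  have hu : |u (dilatedAverageCLM μ κ δ hδ φ)| ≤
      C * s.sup (schwartzSeminormFamily ℝ E F) (dilatedAverageCLM μ κ δ hδ φ) := hC _
  have hp : 0 ≤ (Finset.Iic (M, L + 1)).sup (schwartzSeminormFamily ℝ E F) φ := apply_nonneg _ _
  have hsup : s.sup (schwartzSeminormFamily ℝ E F) (dilatedAverageCLM μ κ δ hδ φ) ≤
      ‖δ‖ * I * (2 ^ M * (Finset.Iic (M, L + 1)).sup (schwartzSeminormFamily ℝ E F) φ) := by
    refine Seminorm.finset_sup_apply_le (by positivity) fun i hi => ?_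
    refine SchwartzMap.seminorm_le_bound ℝ i.1 i.2 _ (by positivity) fun x => ?_
    exact norm_pow_mul_iteratedFDeriv_dilatedAverage_le κ δ 1 _ (Finset.le_sup (f := Prod.fst) hi)
      (Finset.le_sup (f := Prod.snd) hi)
      (fun _ _ _ => one_add_norm_pow_mul_dilatedAverage_le_of_integral_eq_zero κ hκ hδ M) φ x
  calc _ ≤ _ := hu
    _ ≤ C * (‖δ‖ * I * (2 ^ M *
        (Finset.Iic (M, L + 1)).sup (schwartzSeminormFamily ℝ E F) φ)) := by gcongr
    _ = _ := by ring

end DilatedAverage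

/-- The contraction `w ↦ 2^{-ja} w`. -/
def anisoContraction {m : ℕ} (a : Fin m → ℝ) (j : ℕ) : (Fin m → ℝ) →L[ℝ] (Fin m → ℝ) :=
  ContinuousLinearMap.pi fun i =>
    ((2 : ℝ) ^ ((j : ℝ) * a i))⁻¹ • ContinuousLinearMap.proj (R := ℝ) (φ := fun _ : Fin m => ℝ) i

theorem anisoContraction_apply {m : ℕ} (a : Fin m → ℝ) (j : ℕ) (w : Fin m → ℝ) (i : Fin m) :
    anisoContraction a j w i = ((2 : ℝ) ^ ((j : ℝ) * a i))⁻¹ * w i := by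
  simp [anisoContraction]

theorem norm_anisoContraction_le {m : ℕ} {a : Fin m → ℝ} (ha : ∀ i, 1 ≤ a i) (j : ℕ) :
    ‖anisoContraction a j‖ ≤ (1 / 2) ^ j := by
  refine ContinuousLinearMap.opNorm_le_bound _ (by positivity) fun w => ?_
  refine (pi_norm_le_iff_of_nonneg (by positivity)).2 fun i => ?_
  rw [anisoContraction_apply, norm_mul]
  gcongr
  · rw [Real.norm_of_nonneg (by positivity), one_div, inv_pow, ← Real.rpow_natCast]
    gcongr
    · norm_num
    · exact le_mul_of_one_le_right (by positivity) (ha i)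
  · exact norm_le_pi_norm w i

theorem norm_anisoContraction_le_one {m : ℕ} {a : Fin m → ℝ} (ha : ∀ i, 1 ≤ a i) (j : ℕ) :
    ‖anisoContraction a j‖ ≤ 1 :=
  (norm_anisoContraction_le ha j).trans (pow_le_one₀ (by norm_num) (by norm_num))

theorem integral_anisoDil_mul {m : ℕ} (a : Fin m → ℝ) (θ₀ θ φ : (Fin m → ℝ) → ℝ) {j : ℕ}
    (hj : j ≠ 0) (x : Fin m → ℝ) :
    ∫ y, anisoDil a θ₀ θ j (y - x) * φ y = ∫ w, θ w * φ (x + anisoContraction a j w) := by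
  set D : Fin m → ℝ := fun i => (2 : ℝ) ^ ((j : ℝ) * a i)
  have hDpos : ∀ i, 0 < D i := fun i => by positivity
  have hdet : (Matrix.diagonal D).det = (2 : ℝ) ^ ((j : ℝ) * ∑ i, a i) := by
    rw [Matrix.det_diagonal, Finset.mul_sum, Real.rpow_sum_of_pos (by norm_num)]
  have hdet0 : (Matrix.diagonal D).det ≠ 0 := by rw [hdet]; positivity
  have hinj : Topology.IsClosedEmbedding (Matrix.toLin' (Matrix.diagonal D)) := by
    refine LinearMap.isClosedEmbedding_of_injective (LinearMap.ker_eq_bot.2 ?_)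
    intro v w h
    funext i
    have := congrFun h i
    simpa [Matrix.mulVec_diagonal, (hDpos i).ne'] using this
  rw [← integral_add_right_eq_self _ x]
  conv_rhs => rw [← Real.smul_map_diagonal_volume_pi hdet0]
  rw [integral_smul_measure, hinj.measurableEmbedding.integral_map, ← integral_smul]
  refine integral_congr_ae (.of_forall fun z => ?_)
  have hz : anisoContraction a j (Matrix.toLin' (Matrix.diagonal D) z) = z := by
    funext i
    rw [anisoContraction_apply]
    simpa [Matrix.mulVec_diagonal] using inv_mul_cancel_left₀ (hDpos i).ne' (z i)
  have hz' : Matrix.toLin' (Matrix.diagonal D) z = fun i => D i * z i := by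
    funext i
    simp [Matrix.mulVec_diagonal]
  dsimp only
  rw [hz, hz', hdet, anisoDil, if_neg hj, add_sub_cancel_right, add_comm x z,
    ENNReal.toReal_ofReal (abs_nonneg _), abs_of_pos (by positivity), smul_eq_mul, mul_assoc]

theorem VanishingMoments.integral_eq_zero {m : ℕ} {θ : (Fin m → ℝ) → ℝ}
    (hθ : VanishingMoments θ) : ∫ x, θ x = 0 := by
  simpa using hθ 0

/-- The map `φ ↦ ǩ_j * φ` on the Schwartz space. -/
def reflectedConvolution {m : ℕ} {a : Fin m → ℝ} (ha : ∀ i, 1 ≤ a i)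
    (k₀ k : SchwartzMap (Fin m → ℝ) ℝ) (j : ℕ) :
    SchwartzMap (Fin m → ℝ) ℝ →L[ℝ] SchwartzMap (Fin m → ℝ) ℝ :=
  if j = 0 then
    dilatedAverageCLM volume k₀ (ContinuousLinearMap.id ℝ _) ContinuousLinearMap.norm_id_le
  else dilatedAverageCLM volume k (anisoContraction a j) (norm_anisoContraction_le_one ha j)

theorem reflectedConvolution_apply {m : ℕ} {a : Fin m → ℝ} (ha : ∀ i, 1 ≤ a i)
    (k₀ k : SchwartzMap (Fin m → ℝ) ℝ) (j : ℕ) (φ : SchwartzMap (Fin m → ℝ) ℝ)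
    (x : Fin m → ℝ) :
    reflectedConvolution ha k₀ k j φ x = ∫ y, anisoDil a k₀ k j (y - x) * φ y := by
  by_cases hj : j = 0
  · rw [← integral_add_right_eq_self _ x]
    simp [reflectedConvolution, hj, dilatedAverageCLM_apply, anisoDil, add_comm x]
  · rw [integral_anisoDil_mul a k₀ k φ hj, reflectedConvolution, if_neg hj,
      dilatedAverageCLM_apply]
    rfl

theorem exists_abs_apply_reflectedConvolution_le {m : ℕ} {a : Fin m → ℝ} (ha : ∀ i, 1 ≤ a i)
    (k₀ k : SchwartzMap (Fin m → ℝ) ℝ) (hkm : VanishingMoments k)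
    (u : SchwartzMap (Fin m → ℝ) ℝ →L[ℝ] ℝ) :
    ∃ (s : Finset (ℕ × ℕ)) (C : ℝ), 0 ≤ C ∧ ∀ (j : ℕ) (φ : SchwartzMap (Fin m → ℝ) ℝ),
      |u (reflectedConvolution ha k₀ k j φ)| ≤
        C * s.sup (schwartzSeminormFamily ℝ (Fin m → ℝ) ℝ) φ * (1 / 2) ^ j := by
  obtain ⟨s₀, C₀, -, h₀⟩ := Seminorm.bound_of_continuous
    (schwartz_withSeminorms ℝ (Fin m → ℝ) ℝ)
    ((normSeminorm ℝ ℝ).comp (u.comp (reflectedConvolution ha k₀ k 0)).toLinearMap)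
    (by exact continuous_norm.comp (u.comp (reflectedConvolution ha k₀ k 0)).continuous)
  obtain ⟨s, C, hC, h⟩ := exists_norm_apply_dilatedAverageCLM_le (μ := volume) k
    hkm.integral_eq_zero u
  refine ⟨s₀ ∪ s, C₀ + C, by positivity, fun j φ => ?_⟩
  have hs₀ := Seminorm.le_def.1 (Finset.sup_mono (f := schwartzSeminormFamily ℝ (Fin m → ℝ) ℝ)
    (Finset.subset_union_left (s₁ := s₀) (s₂ := s))) φ
  have hs := Seminorm.le_def.1 (Finset.sup_mono (f := schwartzSeminormFamily ℝ (Fin m → ℝ) ℝ)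
    (Finset.subset_union_right (s₁ := s₀) (s₂ := s))) φ
  have hp : 0 ≤ (s₀ ∪ s).sup (schwartzSeminormFamily ℝ (Fin m → ℝ) ℝ) φ := apply_nonneg _ _
  by_cases hj : j = 0
  · subst hj
    rw [pow_zero, mul_one]
    have h₁ : |u (reflectedConvolution ha k₀ k 0 φ)| ≤
      C₀ * s₀.sup (schwartzSeminormFamily ℝ (Fin m → ℝ) ℝ) φ := h₀ φ
    refine h₁.trans ?_
    gcongr
    exact le_add_of_nonneg_right hC
  · rw [reflectedConvolution, if_neg hj]
    refine (h _ _ φ).trans ?_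
    rw [mul_right_comm]
    gcongr
    · exact le_add_of_nonneg_left C₀.coe_nonneg
    · exact norm_anisoContraction_le ha j

/-- With kernels `k₀, k ∈ 𝓢(ℝⁿ)` supported in `{xₙ ≥ 0}`, `k` with
vanishing moments of all orders, the reproducing formula `Σ_j k_j * u = u`, and
`η ∈ 𝓢(ℝ)` with `η(0) = 1`, the operator
`⟨Qu(·,t), φ⟩ = Σ_j η(2^{j a_t} t)·⟨k_j * u, φ⟩` is well defined: for every `φ ∈ 𝓢(ℝⁿ)`
the series converges absolutely, uniformly in `t`; each `Qu(·,t)` is a tempered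
distribution; `t ↦ Qu(·,t)` is weak*-continuous and bounded; and `Qu(·,0) = u`. -/
theorem Q_operator_wellDefined (n : ℕ) (a : Fin (n+1) → ℝ) (ha : ∀ i, 1 ≤ a i)
    (at_ : ℝ) (hat : 1 ≤ at_)
    (k₀ k : SchwartzMap (Fin (n+1) → ℝ) ℝ)
    (hk₀s : tsupport ⇑k₀ ⊆ {x : Fin (n+1) → ℝ | 0 ≤ x (Fin.last n)})
    (hks : tsupport ⇑k ⊆ {x : Fin (n+1) → ℝ | 0 ≤ x (Fin.last n)})
    (hkm : VanishingMoments ⇑k)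
    -- reproducing formula `Σ_j k_j * u = u` in `𝓢'(ℝⁿ)` for every `u ∈ 𝓢'(ℝⁿ)`
    (hrep : ∀ (v : SchwartzMap (Fin (n+1) → ℝ) ℝ →L[ℝ] ℝ)
        (θ : SchwartzMap (Fin (n+1) → ℝ) ℝ)
        (c : ℕ → SchwartzMap (Fin (n+1) → ℝ) ℝ),
        (∀ (j : ℕ) (x : Fin (n+1) → ℝ),
          c j x = ∫ y : Fin (n+1) → ℝ, anisoDil a ⇑k₀ ⇑k j (y - x) * θ y) →
        Tendsto (fun N => ∑ j ∈ Finset.range N, v (c j)) atTop (nhds (v θ)))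
    (η : SchwartzMap ℝ ℝ) (hη : η 0 = 1)
    (u : SchwartzMap (Fin (n+1) → ℝ) ℝ →L[ℝ] ℝ) :
    ∃ Q : ℝ → (SchwartzMap (Fin (n+1) → ℝ) ℝ →L[ℝ] ℝ),
      (∀ (φ : SchwartzMap (Fin (n+1) → ℝ) ℝ)
         (c : ℕ → SchwartzMap (Fin (n+1) → ℝ) ℝ),
        -- `c j` is the Schwartz function `ǩ_j * φ`, so that `⟨k_j * u, φ⟩ = ⟨u, c j⟩`
        (∀ (j : ℕ) (x : Fin (n+1) → ℝ),
          c j x = ∫ y : Fin (n+1) → ℝ, anisoDil a ⇑k₀ ⇑k j (y - x) * φ y) →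
        -- absolute convergence, uniformly in `t`
        TendstoUniformly
          (fun N (t : ℝ) => ∑ j ∈ Finset.range N,
            |η ((2:ℝ) ^ ((j:ℝ) * at_) * t) * u (c j)|)
          (fun t => ∑' j : ℕ, |η ((2:ℝ) ^ ((j:ℝ) * at_) * t) * u (c j)|) atTop ∧
        -- and the sum is `⟨Qu(·,t), φ⟩`
        ∀ t : ℝ, HasSum (fun j : ℕ => η ((2:ℝ) ^ ((j:ℝ) * at_) * t) * u (c j)) (Q t φ)) ∧
      (∀ φ : SchwartzMap (Fin (n+1) → ℝ) ℝ, Continuous fun t => Q t φ) ∧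
      (∀ φ : SchwartzMap (Fin (n+1) → ℝ) ℝ, ∃ C : ℝ, ∀ t : ℝ, |Q t φ| ≤ C) ∧
      Q 0 = u := by
  set T := reflectedConvolution ha k₀ k
  have hT : ∀ (φ : SchwartzMap (Fin (n+1) → ℝ) ℝ) (c : ℕ → SchwartzMap (Fin (n+1) → ℝ) ℝ),
      (∀ (j : ℕ) (x : Fin (n+1) → ℝ),
        c j x = ∫ y : Fin (n+1) → ℝ, anisoDil a ⇑k₀ ⇑k j (y - x) * φ y) →
      c = fun j => T j φ := fun φ c hc => by
    ext j x
    rw [hc, reflectedConvolution_apply]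
  obtain ⟨s, C, hC, hu⟩ := exists_abs_apply_reflectedConvolution_le ha k₀ k hkm u
  set B := SchwartzMap.seminorm ℝ 0 0 η
  have hB : 0 ≤ B := apply_nonneg _ _
  set p := s.sup (schwartzSeminormFamily ℝ (Fin (n+1) → ℝ) ℝ)
  have hbound : ∀ φ (j : ℕ) (t : ℝ), ‖η ((2:ℝ) ^ ((j:ℝ) * at_) * t) * u (T j φ)‖ ≤
      B * (C * p φ * (1 / 2) ^ j) := fun φ j t => by
    rw [norm_mul]
    gcongr
    · exact SchwartzMap.norm_le_seminorm ℝ η _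
    · exact hu j φ
  have hsumm : ∀ φ, Summable fun j : ℕ => B * (C * p φ * (1 / 2) ^ j) := fun φ =>
    (summable_geometric_two.mul_left _).mul_left _
  have hs : ∀ φ (t : ℝ), Summable fun j : ℕ => η ((2:ℝ) ^ ((j:ℝ) * at_) * t) * u (T j φ) :=
    fun φ t => .of_norm_bounded (hsumm φ) fun j => hbound φ j t
  have htsum : ∀ φ (t : ℝ), ‖∑' j : ℕ, η ((2:ℝ) ^ ((j:ℝ) * at_) * t) * u (T j φ)‖ ≤
      B * C * 2 * p φ := fun φ t => by
    refine (tsum_of_norm_bounded (hsumm φ).hasSum fun j => hbound φ j t).trans_eq ?_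
    rw [tsum_mul_left, tsum_mul_left, tsum_geometric_two]
    ring
  let Q : ℝ → (SchwartzMap (Fin (n+1) → ℝ) ℝ →L[ℝ] ℝ) := fun t =>
    SchwartzMap.mkCLMtoNormedSpace (σ := RingHom.id ℝ)
      (fun φ => ∑' j : ℕ, η ((2:ℝ) ^ ((j:ℝ) * at_) * t) * u (T j φ))
      (fun φ ψ => by
        simp only [map_add, mul_add]
        exact (hs φ t).tsum_add (hs ψ t))
      (fun b φ => by
        simp only [map_smul, smul_eq_mul, RingHom.id_apply, mul_left_comm _ b]
        exact tsum_mul_left)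
      ⟨s, B * C * 2, by positivity, fun φ => htsum φ t⟩
  refine ⟨Q, fun φ c hc => ?_, fun φ => ?_, fun φ => ⟨_, fun t => htsum φ t⟩, ?_⟩
  · rw [hT φ c hc]
    refine ⟨tendstoUniformly_tsum_nat (hsumm φ) fun j t => ?_, fun t => (hs φ t).hasSum⟩
    rw [Real.norm_eq_abs, abs_abs]
    exact hbound φ j t
  · exact continuous_tsum (fun j => by have := η.continuous; fun_prop) (hsumm φ) (hbound φ)
  · ext φ
    refine tendsto_nhds_unique (hs φ 0).hasSum.tendsto_sum_nat ?_
    simpa [hη] using hrep u φ (fun j => T j φ) fun j x =>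
      reflectedConvolution_apply ha k₀ k j φ x

end
end

section
/- Let p₁,…,pₙ, r ∈ (0,∞), q ∈ (0,∞], a > 0, and let N > 0 satisfy N·r > 1. Let f : ℝ → ℂ be continuous with sup_{t∈ℝ} (1+|t|)^N·|f(t)| < ∞. Then there exists a constant c (depending on n, p₁,…,pₙ, r, q, a, N and f) such that for every sequence (v_j)_{j≥0} of measurable functions v_j : ℝⁿ → ℂ, the inequality ‖ { (x,t) ↦ v_j(x)·2^{ja/r}·f(2^{ja}t) }_{j≥0} ‖_{L_{(p₁,…,pₙ,r)}(ℓ_q)(ℝⁿ×ℝ)} ≤ c·( Σ_{j=0}^∞ ‖v_j‖_{L_{(p₁,…,pₙ)}(ℝⁿ)}^r )^{1/r} holds. -/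
open MeasureTheory Filter Topology ENNReal

noncomputable section

/-- The mixed Lebesgue (quasi-)norm `‖F‖_{L_{(p₁,…,pₘ)}}` of a nonnegative function on `ℝᵐ`,
integrating first in the first coordinate and last in the last coordinate. -/
def mixedLpNorm : (m : ℕ) → (Fin m → ℝ) → ((Fin m → ℝ) → ℝ≥0∞) → ℝ≥0∞
  | 0, _, F => F Fin.elim0
  | m + 1, p, F =>
      (∫⁻ s : ℝ,
        (mixedLpNorm m (fun i => p i.castSucc) fun x => F (Fin.snoc x s)) ^ p (Fin.last m))
        ^ (1 / p (Fin.last m))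

/-- The `ℓ_q`-norm of a sequence in `[0,∞]` (supremum when `q = ∞`). -/
def lqNorm (q : ℝ≥0∞) (h : ℕ → ℝ≥0∞) : ℝ≥0∞ :=
  if q = ⊤ then ⨆ j, h j else (∑' j, h j ^ q.toReal) ^ (1 / q.toReal)

theorem mixedLpNorm_mono {m : ℕ} {p : Fin m → ℝ} (hp : ∀ i, 0 < p i)
    {F G : (Fin m → ℝ) → ℝ≥0∞} (h : ∀ x, F x ≤ G x) :
    mixedLpNorm m p F ≤ mixedLpNorm m p G := by
  induction m with
  | zero => exact h _
  | succ m ih =>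
    have hl := hp (Fin.last m)
    refine ENNReal.rpow_le_rpow (lintegral_mono fun s => ENNReal.rpow_le_rpow ?_ hl.le)
      (by positivity)
    exact ih (fun i => hp i.castSucc) fun x => h _

theorem mixedLpNorm_const_mul {m : ℕ} {p : Fin m → ℝ} (hp : ∀ i, 0 < p i) {c : ℝ≥0∞}
    (hc : c ≠ ⊤) (F : (Fin m → ℝ) → ℝ≥0∞) :
    mixedLpNorm m p (fun x => c * F x) = c * mixedLpNorm m p F := by
  induction m with
  | zero => rfl
  | succ m ih =>
    have hl := hp (Fin.last m)
    simp only [mixedLpNorm]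
    simp_rw [ih (fun i => hp i.castSucc), ENNReal.mul_rpow_of_nonneg _ _ hl.le]
    rw [lintegral_const_mul' _ _ (ENNReal.rpow_ne_top_of_nonneg hl.le hc),
      ENNReal.mul_rpow_of_nonneg _ _ (by positivity), ← ENNReal.rpow_mul,
      mul_one_div_cancel hl.ne', ENNReal.rpow_one]

theorem measurable_finSnoc {m : ℕ} :
    Measurable fun z : (Fin m → ℝ) × ℝ => (Fin.snoc z.1 z.2 : Fin (m + 1) → ℝ) := by
  refine measurable_pi_lambda _ fun i => Fin.lastCases ?_ (fun i => ?_) i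
  · simpa using measurable_snd
  · simp only [Fin.snoc_castSucc]
    fun_prop

theorem measurable_mixedLpNorm {S : Type*} [MeasurableSpace S] {m : ℕ} (p : Fin m → ℝ)
    {F : S → (Fin m → ℝ) → ℝ≥0∞} (hF : Measurable (Function.uncurry F)) :
    Measurable fun s => mixedLpNorm m p (F s) := by
  induction m generalizing S with
  | zero => exact hF.comp (measurable_id.prodMk measurable_const)
  | succ m ih =>
    simp only [mixedLpNorm]
    refine Measurable.pow_const (Measurable.lintegral_prod_right' (f := fun z : S × ℝ =>
      mixedLpNorm m (fun i => p i.castSucc) (fun x => F z.1 (Fin.snoc x z.2)) ^ p (Fin.last m))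
      (Measurable.pow_const ?_ _)) _
    refine ih (fun i => p i.castSucc) (F := fun (z : S × ℝ) x => F z.1 (Fin.snoc x z.2)) ?_
    exact hF.comp ((measurable_fst.comp measurable_fst).prodMk
      (measurable_finSnoc.comp (measurable_snd.prodMk (measurable_snd.comp measurable_fst))))

/-- Minkowski's inequality for countable sums. -/
theorem lintegral_rpow_tsum_le {α : Type*} [MeasurableSpace α] {μ : Measure α} {p : ℝ}
    (hp : 1 ≤ p) {g : ℕ → α → ℝ≥0∞} (hg : ∀ j, Measurable (g j)) :
    (∫⁻ a, (∑' j, g j a) ^ p ∂μ) ^ (1 / p) ≤ ∑' j, (∫⁻ a, g j a ^ p ∂μ) ^ (1 / p) := by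
  have hp0 : 0 < p := by linarith
  have hfin : ∀ k : ℕ, (∫⁻ a, (∑ j ∈ Finset.range k, g j a) ^ p ∂μ) ^ (1 / p) ≤
      ∑ j ∈ Finset.range k, (∫⁻ a, g j a ^ p ∂μ) ^ (1 / p) := by
    intro k
    induction k with
    | zero => simp [hp0]
    | succ k ih =>
      simp_rw [Finset.sum_range_succ]
      exact (ENNReal.lintegral_Lp_add_le
        (Finset.measurable_fun_sum _ fun j _ => hg j).aemeasurable
        (hg k).aemeasurable hp).trans (add_le_add_left ih _)
  have hmono : Monotone fun (k : ℕ) (a : α) => (∑ j ∈ Finset.range k, g j a) ^ p := by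
    intro k l hkl a
    exact ENNReal.rpow_le_rpow (Finset.sum_le_sum_of_subset (Finset.range_mono hkl)) hp0.le
  have hsup : ∀ a, (∑' j, g j a) ^ p = ⨆ k : ℕ, (∑ j ∈ Finset.range k, g j a) ^ p := by
    intro a
    rw [ENNReal.tsum_eq_iSup_nat]
    exact (ENNReal.orderIsoRpow p hp0).map_iSup _
  simp_rw [hsup]
  rw [lintegral_iSup
    (fun k => (Finset.measurable_fun_sum _ fun j _ => hg j).pow_const p) hmono]
  have hroot := (ENNReal.orderIsoRpow (1 / p) (by positivity)).map_iSup
    fun k : ℕ => ∫⁻ a, (∑ j ∈ Finset.range k, g j a) ^ p ∂μ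
  simp only [ENNReal.orderIsoRpow_apply] at hroot
  rw [hroot]
  exact iSup_le fun k => (hfin k).trans (ENNReal.sum_le_tsum _)

/-- The `s`-triangle inequality for mixed norms all of whose exponents are at least `s`. -/
theorem mixedLpNorm_tsum_rpow_le {m : ℕ} {p : Fin m → ℝ} {s : ℝ} (hs : 0 < s)
    (hp : ∀ i, s ≤ p i) {G : ℕ → (Fin m → ℝ) → ℝ≥0∞} (hG : ∀ j, Measurable (G j)) :
    mixedLpNorm m p (fun x => (∑' j, G j x ^ s) ^ (1 / s)) ≤
      (∑' j, mixedLpNorm m p (G j) ^ s) ^ (1 / s) := by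
  induction m with
  | zero => exact le_rfl
  | succ m ih =>
    have hl : s ≤ p (Fin.last m) := hp _
    have hl0 : 0 < p (Fin.last m) := hs.trans_le hl
    simp only [mixedLpNorm]
    set P := p (Fin.last m)
    set H : ℕ → ℝ → ℝ≥0∞ := fun j y =>
      mixedLpNorm m (fun i => p i.castSucc) fun x => G j (Fin.snoc x y)
    have hHm : ∀ j, Measurable (H j) := fun j =>
      measurable_mixedLpNorm _ (F := fun y x => G j (Fin.snoc x y)) 
        ((hG j).comp (measurable_finSnoc.comp (measurable_snd.prodMk measurable_fst)))
    have hexp : 1 / P = 1 / (P / s) * (1 / s) := by field_simp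
    calc _ ≤ (∫⁻ y, (∑' j, H j y ^ s) ^ (P / s)) ^ (1 / P) := by
          refine ENNReal.rpow_le_rpow (lintegral_mono fun y => ?_) (by positivity)
          rw [div_eq_inv_mul P s, ENNReal.rpow_mul, ← one_div]
          refine ENNReal.rpow_le_rpow ?_ hl0.le
          exact ih (fun i => hp i.castSucc) fun j =>
            (hG j).comp (measurable_finSnoc.comp (measurable_id.prodMk measurable_const))
      _ ≤ (∑' j, (∫⁻ y, (H j y ^ s) ^ (P / s)) ^ (1 / (P / s))) ^ (1 / s) := by
          rw [hexp, ENNReal.rpow_mul]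
          exact ENNReal.rpow_le_rpow (lintegral_rpow_tsum_le ((one_le_div hs).2 hl)
            fun j => (hHm j).pow_const s) (by positivity)
      _ = _ := by
          congr 2
          ext j
          simp_rw [← ENNReal.rpow_mul]
          rw [mul_div_cancel₀ _ hs.ne']
          congr 1
          field_simp

theorem ENNReal.tsum_rpow_le_rpow_tsum {ι : Type*} {κ : ℝ} (hκ : 1 ≤ κ) (x : ι → ℝ≥0∞) :
    ∑' j, x j ^ κ ≤ (∑' j, x j) ^ κ := by
  have hsplit : ∀ y : ℝ≥0∞, y ^ κ = y * y ^ (κ - 1) := by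
    intro y
    conv_rhs => rw [← ENNReal.rpow_one y, ← ENNReal.rpow_mul, one_mul,
      ← ENNReal.rpow_add_of_nonneg _ _ zero_le_one (by linarith)]
    congr 1
    ring
  rw [hsplit (∑' j, x j), ← ENNReal.tsum_mul_right]
  refine ENNReal.tsum_le_tsum fun j => ?_
  rw [hsplit]
  exact mul_le_mul_right (ENNReal.rpow_le_rpow (ENNReal.le_tsum j) (by linarith)) _

theorem lqNorm_le_tsum_rpow {q : ℝ≥0∞} {s : ℝ} (hs : 0 < s) (hsq : ENNReal.ofReal s ≤ q)
    (h : ℕ → ℝ≥0∞) : lqNorm q h ≤ (∑' j, h j ^ s) ^ (1 / s) := by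
  unfold lqNorm
  split_ifs with hq
  · refine iSup_le fun j => ?_
    calc h j = (h j ^ s) ^ (1 / s) := by
          rw [← ENNReal.rpow_mul, mul_one_div_cancel hs.ne', ENNReal.rpow_one]
      _ ≤ _ := ENNReal.rpow_le_rpow (ENNReal.le_tsum j) (by positivity)
  · have hsQ : s ≤ q.toReal := (ENNReal.ofReal_le_iff_le_toReal hq).1 hsq
    set Q := q.toReal
    have hQ : 0 < Q := hs.trans_le hsQ
    have hexp : 1 / s = (Q / s) * (1 / Q) := by field_simp
    rw [hexp, ENNReal.rpow_mul]
    refine ENNReal.rpow_le_rpow ?_ (by positivity)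
    calc _ = ∑' j, (h j ^ s) ^ (Q / s) := by
          simp_rw [← ENNReal.rpow_mul, mul_div_cancel₀ Q hs.ne']
      _ ≤ _ := ENNReal.tsum_rpow_le_rpow_tsum ((one_le_div hs).2 hsQ) _

/-- A weighted form of Jensen's inequality for series. -/
theorem ENNReal.rpow_tsum_mul_le {ι : Type*} {ρ : ℝ} (hρ : 1 ≤ ρ) (w x : ι → ℝ≥0∞) :
    (∑' j, w j * x j) ^ ρ ≤ (∑' j, w j) ^ (ρ - 1) * ∑' j, w j * x j ^ ρ := by
  have hρ0 : 0 < ρ := by linarith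
  have hle : ∑' j, w j * x j ≤ (∑' j, w j) ^ (1 - ρ⁻¹) * (∑' j, w j * x j ^ ρ) ^ ρ⁻¹ := by
    rw [ENNReal.tsum_eq_iSup_sum]
    refine iSup_le fun t => (ENNReal.inner_le_weight_mul_Lp_of_nonneg t hρ w x).trans ?_
    gcongr
    · have := inv_le_one_of_one_le₀ hρ
      linarith
    · exact ENNReal.sum_le_tsum t
    · exact ENNReal.sum_le_tsum t
  refine (ENNReal.rpow_le_rpow hle hρ0.le).trans_eq ?_
  rw [ENNReal.mul_rpow_of_nonneg _ _ hρ0.le, ← ENNReal.rpow_mul, ← ENNReal.rpow_mul,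
    inv_mul_cancel₀ hρ0.ne', ENNReal.rpow_one, sub_mul, one_mul, inv_mul_cancel₀ hρ0.ne']

theorem integrable_one_add_abs_rpow_mul_abs_rpow {σ M : ℝ} (hσ : 0 < σ) (hM : σ < M) :
    Integrable fun t : ℝ => (1 + |t|) ^ (-M) * |t| ^ (σ - 1) := by
  have hmeas : Measurable fun t : ℝ => (1 + |t|) ^ (-M) * |t| ^ (σ - 1) := by fun_prop
  have hnear : IntegrableOn (fun t : ℝ => (1 + |t|) ^ (-M) * |t| ^ (σ - 1)) (Set.Ioc 0 1) := by
    have hint : IntegrableOn (fun t : ℝ => t ^ (σ - 1)) (Set.Ioc 0 1) :=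
      (intervalIntegrable_iff_integrableOn_Ioc_of_le zero_le_one).1
        (intervalIntegral.intervalIntegrable_rpow' (by linarith))
    refine Integrable.mono' hint hmeas.aestronglyMeasurable ?_
    refine (ae_restrict_mem measurableSet_Ioc).mono fun t ht => ?_
    have ht0 : 0 < t := ht.1
    rw [Real.norm_of_nonneg (by positivity), abs_of_pos ht0]
    exact mul_le_of_le_one_left (by positivity)
      (Real.rpow_le_one_of_one_le_of_nonpos (by linarith) (by linarith))
  have hfar : IntegrableOn (fun t : ℝ => (1 + |t|) ^ (-M) * |t| ^ (σ - 1)) (Set.Ioi 1) := by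
    have hint : IntegrableOn (fun t : ℝ => t ^ (-M + (σ - 1))) (Set.Ioi 1) :=
      integrableOn_Ioi_rpow_of_lt (by linarith) one_pos
    refine Integrable.mono' hint hmeas.aestronglyMeasurable ?_
    refine (ae_restrict_mem measurableSet_Ioi).mono fun t ht => ?_
    have ht0 : 0 < t := one_pos.trans ht
    rw [Real.norm_of_nonneg (by positivity), abs_of_pos ht0, Real.rpow_add ht0]
    exact mul_le_mul_of_nonneg_right
      (Real.rpow_le_rpow_of_nonpos ht0 (by linarith) (by linarith)) (by positivity)
  have hpos : IntegrableOn (fun t : ℝ => (1 + |t|) ^ (-M) * |t| ^ (σ - 1)) (Set.Ioi 0) := by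
    rw [← Set.Ioc_union_Ioi_eq_Ioi zero_le_one]
    exact hnear.union hfar
  have hneg : IntegrableOn (fun t : ℝ => (1 + |t|) ^ (-M) * |t| ^ (σ - 1)) (Set.Iic 0) := by
    rw [← Measure.map_neg_eq_self (volume : Measure ℝ)]
    have hemb : MeasurableEmbedding fun x : ℝ => -x := (Homeomorph.neg ℝ).measurableEmbedding
    rw [hemb.integrableOn_map_iff]
    simp_rw [Function.comp_def, abs_neg, Set.neg_preimage, Set.neg_Iic, neg_zero]
    exact Iff.mpr integrableOn_Ici_iff_integrableOn_Ioi hpos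
  rw [← integrableOn_univ, ← Set.Iic_union_Ioi (a := (0 : ℝ))]
  exact hneg.union hpos

theorem summable_min_zpow_rpow {lam σ M : ℝ} (hlam : 1 < lam) (hσ : 0 < σ) (hM : σ < M) :
    Summable fun m : ℤ => min ((lam ^ (m + 1)) ^ σ) ((lam ^ m) ^ (σ - M)) := by
  have hl0 : 0 < lam := by linarith
  have hgeom : ∀ τ : ℝ, τ < 0 → Summable fun k : ℕ => (lam ^ τ) ^ k := fun τ hτ =>
    summable_geometric_of_lt_one (by positivity) (Real.rpow_lt_one_of_one_lt_of_neg hlam hτ)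
  refine Summable.of_nat_of_neg ?_ ?_
  · refine Summable.of_nonneg_of_le (fun k => by positivity) (fun k => ?_)
      (hgeom (σ - M) (by linarith))
    refine (min_le_right _ _).trans_eq ?_
    rw [zpow_natCast, ← Real.rpow_natCast_mul hl0.le, ← Real.rpow_mul_natCast hl0.le, mul_comm]
  · refine Summable.of_nonneg_of_le (fun k => by positivity) (fun k => ?_)
      ((hgeom (-σ) (by linarith)).mul_left (lam ^ σ))
    refine (min_le_left _ _).trans_eq ?_
    rw [← Real.rpow_mul_natCast hl0.le, ← Real.rpow_add hl0, ← Real.rpow_intCast,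
      ← Real.rpow_mul hl0.le]
    push_cast
    ring_nf

theorem exists_tsum_dilate_le {lam σ M : ℝ} (hlam : 1 < lam) (hσ : 0 < σ) (hM : σ < M) :
    ∃ C : ℝ≥0∞, C ≠ ⊤ ∧ ∀ t : ℝ, t ≠ 0 →
      ∑' j : ℕ, ENNReal.ofReal ((lam ^ j) ^ σ * (1 + lam ^ j * |t|) ^ (-M)) ≤
        C * ENNReal.ofReal (|t| ^ (-σ)) := by
  have hl0 : 0 < lam := by linarith
  refine ⟨_, (summable_min_zpow_rpow hlam hσ hM).tsum_ofReal_ne_top, fun t ht => ?_⟩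
  have ht0 : 0 < |t| := abs_pos.2 ht
  obtain ⟨k, hk1, hk2⟩ := exists_mem_Ico_zpow ht0 hlam
  rw [← ENNReal.tsum_mul_right]
  have hinj : Function.Injective fun j : ℕ => (j : ℤ) + k := fun i j h => by
    simpa using h
  refine le_trans (ENNReal.tsum_le_tsum fun j => ?_)
    (ENNReal.tsum_comp_le_tsum_of_injective hinj _)
  rw [← ENNReal.ofReal_mul (by positivity)]
  refine ENNReal.ofReal_le_ofReal ?_
  have hu : 0 < lam ^ j * |t| := by positivity
  have hlow : lam ^ ((j : ℤ) + k) ≤ lam ^ j * |t| := by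
    rw [zpow_add₀ hl0.ne', zpow_natCast]
    gcongr
  have hupp : lam ^ j * |t| ≤ lam ^ ((j : ℤ) + k + 1) := by
    rw [add_assoc, zpow_add₀ hl0.ne', zpow_natCast]
    gcongr
  have hsplit : (lam ^ j) ^ σ = (lam ^ j * |t|) ^ σ * |t| ^ (-σ) := by
    rw [Real.mul_rpow (by positivity) ht0.le, mul_assoc, ← Real.rpow_add ht0, add_neg_cancel,
      Real.rpow_zero, mul_one]
  rw [hsplit, mul_right_comm]
  refine mul_le_mul_of_nonneg_right (le_min ?_ ?_) (by positivity)
  · exact (mul_le_of_le_one_right (by positivity)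
      (Real.rpow_le_one_of_one_le_of_nonpos (by linarith) (by linarith))).trans
      (Real.rpow_le_rpow hu.le hupp hσ.le)
  · refine le_trans ?_ (Real.rpow_le_rpow_of_nonpos (by positivity) hlow (by linarith))
    rw [sub_eq_add_neg, Real.rpow_add hu]
    exact mul_le_mul_of_nonneg_left
      (Real.rpow_le_rpow_of_nonpos hu (by linarith) (by linarith)) (by positivity)

theorem lintegral_dilate_mul_abs_rpow {c σ M : ℝ} (hc : 0 < c) :
    ∫⁻ t : ℝ, ENNReal.ofReal (c ^ σ * (1 + c * |t|) ^ (-M)) * ENNReal.ofReal (|t| ^ (σ - 1)) =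
      ∫⁻ t : ℝ, ENNReal.ofReal ((1 + |t|) ^ (-M) * |t| ^ (σ - 1)) := by
  conv_rhs => rw [← Real.smul_map_volume_mul_left hc.ne', lintegral_smul_measure,
    lintegral_map (by fun_prop) (measurable_const_mul c), smul_eq_mul,
    ← lintegral_const_mul _ (by fun_prop)]
  refine lintegral_congr fun t => ?_
  rw [← ENNReal.ofReal_mul (by positivity), ← ENNReal.ofReal_mul (by positivity), abs_mul,
    abs_of_pos hc, Real.mul_rpow hc.le (abs_nonneg t)]
  congr 1
  have hcσ : c * c ^ (σ - 1) = c ^ σ := by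
    rw [mul_comm, Real.rpow_sub_one hc.ne', div_mul_cancel₀ _ hc.ne']
  rw [← hcσ]
  ring

/-- A Schur-type estimate: the operator `A ↦ ∑ⱼ λ^{j/ρ} (1 + λʲ|t|)^{-M} Aⱼ` is bounded from
`ℓ_ρ` to `L_ρ(ℝ)` when `M ρ > 1`. -/
theorem exists_lintegral_rpow_tsum_dilate_le {lam ρ M : ℝ} (hlam : 1 < lam) (hρ : 1 ≤ ρ)
    (hM : ρ⁻¹ < M) :
    ∃ K : ℝ≥0∞, K ≠ ⊤ ∧ ∀ A : ℕ → ℝ≥0∞,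
      ∫⁻ t : ℝ, (∑' j : ℕ,
          ENNReal.ofReal ((lam ^ j) ^ ρ⁻¹ * (1 + lam ^ j * |t|) ^ (-M)) * A j) ^ ρ ≤
        K * ∑' j, A j ^ ρ := by
  have hρ0 : 0 < ρ := by linarith
  have hσ : 0 < ρ⁻¹ := by positivity
  obtain ⟨C, hC, hCsum⟩ := exists_tsum_dilate_le hlam hσ hM
  have hint := (integrable_one_add_abs_rpow_mul_abs_rpow hσ hM).lintegral_lt_top
  set I := ∫⁻ t : ℝ, ENNReal.ofReal ((1 + |t|) ^ (-M) * |t| ^ (ρ⁻¹ - 1))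
  have hCρ : C ^ (ρ - 1) ≠ ⊤ := ENNReal.rpow_ne_top_of_nonneg (by linarith) hC
  refine ⟨C ^ (ρ - 1) * I, ENNReal.mul_ne_top hCρ hint.ne, fun A => ?_⟩
  set w : ℕ → ℝ → ℝ≥0∞ := fun j t =>
    ENNReal.ofReal ((lam ^ j) ^ ρ⁻¹ * (1 + lam ^ j * |t|) ^ (-M))
  have hwm : ∀ j, Measurable (w j) := fun j => by fun_prop
  have hpt : ∀ᵐ t : ℝ, (∑' j, w j t * A j) ^ ρ ≤
      C ^ (ρ - 1) * ∑' j, w j t * ENNReal.ofReal (|t| ^ (ρ⁻¹ - 1)) * A j ^ ρ := by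
    filter_upwards [Measure.ae_ne volume (0 : ℝ)] with t ht
    have ht0 : 0 < |t| := abs_pos.2 ht
    refine (ENNReal.rpow_tsum_mul_le hρ _ _).trans ?_
    calc _ ≤ (C * ENNReal.ofReal (|t| ^ (-ρ⁻¹))) ^ (ρ - 1) * ∑' j, w j t * A j ^ ρ :=
          mul_le_mul_left (ENNReal.rpow_le_rpow (hCsum t ht) (by linarith)) _
      _ = _ := by
          rw [ENNReal.mul_rpow_of_nonneg _ _ (by linarith),
            ENNReal.ofReal_rpow_of_pos (by positivity), ← Real.rpow_mul ht0.le, mul_assoc,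
            ← ENNReal.tsum_mul_left]
          have hexp : -ρ⁻¹ * (ρ - 1) = ρ⁻¹ - 1 := by field_simp; ring
          rw [hexp]
          congr 2
          ext j
          ring
  refine (lintegral_mono_ae hpt).trans_eq ?_
  rw [lintegral_const_mul' _ _ hCρ, lintegral_tsum fun j => by fun_prop, mul_assoc,
    ← ENNReal.tsum_mul_left (a := I)]
  congr 1
  refine tsum_congr fun j => ?_
  rw [lintegral_mul_const _ (by fun_prop),
    lintegral_dilate_mul_abs_rpow (pow_pos (zero_lt_one.trans hlam) j)]

/-- (Fundamental mixed-norm estimate, Proposition `Q-prop`.)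
For exponents `p₁,…,pₙ, r ∈ (0,∞)`, `q ∈ (0,∞]`, `a > 0`, `N > 0` with `N·r > 1`, and a
continuous `f : ℝ → ℂ` with `(1+|t|)^N |f(t)|` bounded, there is a constant `c` such that
`‖{(x,t) ↦ v_j(x)·2^{ja/r}·f(2^{ja}t)}_j ‖_{L_{(p₁,…,pₙ,r)}(ℓ_q)} ≤
c·(Σ_j ‖v_j‖_{L_{(p₁,…,pₙ)}}^r)^{1/r}` for all sequences of measurable `v_j : ℝⁿ → ℂ`. -/
theorem mixed_norm_tensor_estimate (n : ℕ) (p : Fin n → ℝ) (hp : ∀ i, 0 < p i)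
    (r : ℝ) (hr : 0 < r) (q : ℝ≥0∞) (hq : 0 < q)
    (a : ℝ) (ha : 0 < a) (N : ℝ) (hN : 0 < N) (hNr : 1 < N * r)
    (f : ℝ → ℂ) (hf : Continuous f)
    (hfb : ∃ C : ℝ, ∀ t : ℝ, (1 + |t|) ^ N * ‖f t‖ ≤ C) :
    ∃ c : ℝ≥0∞, c ≠ ⊤ ∧
      ∀ v : ℕ → (Fin n → ℝ) → ℂ, (∀ j, Measurable (v j)) →
        (∫⁻ t : ℝ,
            (mixedLpNorm n p fun x =>
              lqNorm q fun j =>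
                (‖v j x‖₊ : ℝ≥0∞)
                  * ENNReal.ofReal ((2:ℝ) ^ ((j:ℝ) * a / r))
                  * (‖f ((2:ℝ) ^ ((j:ℝ) * a) * t)‖₊ : ℝ≥0∞)) ^ r) ^ (1 / r)
          ≤ c * (∑' j : ℕ, (mixedLpNorm n p fun x => (‖v j x‖₊ : ℝ≥0∞)) ^ r) ^ (1 / r) := by
  obtain ⟨C, hC⟩ := hfb
  have hC0 : 0 ≤ C := le_trans (by positivity) (hC 0)
  obtain ⟨s, hs, hsp, hsr, hsq⟩ : ∃ s : ℝ, 0 < s ∧ (∀ i, s ≤ p i) ∧ s ≤ r ∧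
      ENNReal.ofReal s ≤ q := by
    have hlim : Tendsto ENNReal.ofReal (𝓝[>] 0) (𝓝 0) := by
      simpa using (ENNReal.continuous_ofReal.tendsto 0).mono_left nhdsWithin_le_nhds
    have hle : ∀ {y : ℝ}, 0 < y → ∀ᶠ s in 𝓝[>] (0 : ℝ), s ≤ y := fun hy =>
      (eventually_le_nhds hy).filter_mono nhdsWithin_le_nhds
    exact (eventually_mem_nhdsWithin.and ((eventually_all.2 fun i => hle (hp i)).and
      ((hle hr).and (hlim.eventually_le_const hq)))).exists
  have hlam : (1 : ℝ) < 2 ^ a := Real.one_lt_rpow one_lt_two ha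
  have hM : (r / s)⁻¹ < N * s := by
    rw [inv_div, div_lt_iff₀ hr]
    nlinarith
  obtain ⟨K, hK, hKle⟩ :=
    exists_lintegral_rpow_tsum_dilate_le hlam ((one_le_div hs).2 hsr) hM
  refine ⟨(K * ENNReal.ofReal C ^ r) ^ (1 / r), ENNReal.rpow_ne_top_of_nonneg (by positivity)
    (ENNReal.mul_ne_top hK (ENNReal.rpow_ne_top_of_nonneg hr.le ENNReal.ofReal_ne_top)),
    fun v hv => ?_⟩
  rw [← ENNReal.mul_rpow_of_nonneg _ _ (by positivity)]
  refine ENNReal.rpow_le_rpow ?_ (by positivity)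
  set d : ℕ → ℝ → ℝ≥0∞ := fun j t => ENNReal.ofReal
    (C * ((2 : ℝ) ^ ((j : ℝ) * a / r) * (1 + (2 : ℝ) ^ ((j : ℝ) * a) * |t|) ^ (-N))) with hd
  set V : ℕ → ℝ≥0∞ := fun j => mixedLpNorm n p fun x => (‖v j x‖₊ : ℝ≥0∞) with hV
  have hfd : ∀ (j : ℕ) (t : ℝ), ENNReal.ofReal ((2:ℝ) ^ ((j:ℝ) * a / r)) *
      (‖f ((2:ℝ) ^ ((j:ℝ) * a) * t)‖₊ : ℝ≥0∞) ≤ d j t := by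
    intro j t
    have hu : 0 < 1 + (2 : ℝ) ^ ((j : ℝ) * a) * |t| := by positivity
    have hCt := hC ((2:ℝ) ^ ((j:ℝ) * a) * t)
    rw [abs_mul, abs_of_pos (by positivity : (0 : ℝ) < 2 ^ ((j : ℝ) * a))] at hCt
    have hft : ‖f ((2:ℝ) ^ ((j:ℝ) * a) * t)‖ ≤
        C * (1 + (2 : ℝ) ^ ((j : ℝ) * a) * |t|) ^ (-N) := by
      rwa [Real.rpow_neg hu.le, ← div_eq_mul_inv, le_div_iff₀ (by positivity), mul_comm]
    rw [← enorm_eq_nnnorm, ← ofReal_norm, ← ENNReal.ofReal_mul (by positivity)]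
    refine ENNReal.ofReal_le_ofReal ?_
    rw [mul_left_comm C]
    gcongr
  have hds : ∀ j t, d j t ^ s = ENNReal.ofReal ((((2 : ℝ) ^ a) ^ j) ^ (r / s)⁻¹ *
      (1 + ((2 : ℝ) ^ a) ^ j * |t|) ^ (-(N * s))) * ENNReal.ofReal C ^ s := by
    intro j t
    have hpow : (2 : ℝ) ^ ((j : ℝ) * a) = ((2 : ℝ) ^ a) ^ j := by
      rw [← Real.rpow_mul_natCast two_pos.le, mul_comm]
    have hu : 0 < 1 + ((2 : ℝ) ^ a) ^ j * |t| := by positivity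
    simp only [hd]
    rw [ENNReal.ofReal_mul hC0, ENNReal.mul_rpow_of_nonneg _ _ hs.le, mul_comm,
      ENNReal.ofReal_rpow_of_pos (by positivity), Real.mul_rpow (by positivity) (by positivity),
      div_eq_mul_inv _ r, Real.rpow_mul two_pos.le, hpow, ← Real.rpow_mul hu.le,
      ← Real.rpow_mul (by positivity), neg_mul, inv_div, inv_mul_eq_div]
  have hpt : ∀ t : ℝ, (mixedLpNorm n p fun x => lqNorm q fun j =>
      (‖v j x‖₊ : ℝ≥0∞) * ENNReal.ofReal ((2:ℝ) ^ ((j:ℝ) * a / r))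
        * (‖f ((2:ℝ) ^ ((j:ℝ) * a) * t)‖₊ : ℝ≥0∞)) ≤ (∑' j, (d j t * V j) ^ s) ^ (1 / s) := by
    intro t
    calc _ ≤ mixedLpNorm n p fun x =>
          (∑' j, (d j t * (‖v j x‖₊ : ℝ≥0∞)) ^ s) ^ (1 / s) := by
          refine mixedLpNorm_mono hp fun x => (lqNorm_le_tsum_rpow hs hsq _).trans ?_
          refine ENNReal.rpow_le_rpow (ENNReal.tsum_le_tsum fun j =>
            ENNReal.rpow_le_rpow ?_ hs.le) (by positivity)
          rw [mul_assoc, mul_comm]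
          exact mul_le_mul_left (hfd j t) _
      _ ≤ _ := by
          refine (mixedLpNorm_tsum_rpow_le hs hsp
            (G := fun j x => d j t * (‖v j x‖₊ : ℝ≥0∞)) fun j => ?_).trans_eq ?_
          · exact (hv j).nnnorm.coe_nnreal_ennreal.const_mul _
          · simp only [hd, hV, mixedLpNorm_const_mul hp ENNReal.ofReal_ne_top]
  calc _ ≤ ∫⁻ t : ℝ, (∑' j : ℕ, ENNReal.ofReal ((((2 : ℝ) ^ a) ^ j) ^ (r / s)⁻¹ *
        (1 + ((2 : ℝ) ^ a) ^ j * |t|) ^ (-(N * s))) *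
          (ENNReal.ofReal C ^ s * V j ^ s)) ^ (r / s) := by
        refine lintegral_mono fun t => (ENNReal.rpow_le_rpow (hpt t) hr.le).trans_eq ?_
        rw [← ENNReal.rpow_mul, one_div_mul_eq_div]
        simp_rw [ENNReal.mul_rpow_of_nonneg _ _ hs.le, hds, mul_assoc]
    _ ≤ _ := hKle _
    _ = _ := by
        rw [mul_assoc, ← ENNReal.tsum_mul_left (a := ENNReal.ofReal C ^ r)]
        congr 1
        refine tsum_congr fun j => ?_
        rw [ENNReal.mul_rpow_of_nonneg _ _ (by positivity), ← ENNReal.rpow_mul,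
          ← ENNReal.rpow_mul, mul_div_cancel₀ r hs.ne']

end
end
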